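/- arXiv:math/0502478 — 5 statements merged into one kernel-verified Lean document; each statement's English description precedes it below -/
import Mathlib

section
/- Let k be an algebraically closed field of characteristic zero, q a finite-dimensional Lie algebra over k, V a finite-dimensional q-module, and v ∈ V. Then min_{x ∈ V} dim q_x ≤ min_{w ∈ V} dim {s ∈ q : s·v = 0 and s·w ∈ q·v}; equivalently, ind(q, V*) ≤ ind(q_v, (V/q·v)*) (Vinberg's inequality). -/
/-!
Vinberg's inequality: for a finite-dimensional Lie algebra `q` over an algebraically
closed field `k` of characteristic zero, a finite-dimensional `q`-module `V` and `v ∈ V`,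

  `min_{x ∈ V} dim q_x ≤ min_{w ∈ V} dim {s ∈ q : s·v = 0 ∧ s·w ∈ q·v}`;

equivalently, `ind(q, V*) ≤ ind(q_v, (V/q·v)*)`.
-/

open Module

namespace Stmt

variable (k : Type*) [Field k]
variable (L : Type*) [LieRing L] [LieAlgebra k L]
variable (M : Type*) [AddCommGroup M] [Module k M] [LieRingModule L M] [LieModule k L M]

/-- The linear map `s ↦ s·v = ⁅s, v⁆`. -/
def actAt (v : M) : L →ₗ[k] M where
  toFun s := ⁅s, v⁆
  map_add' a b := add_lie a b v
  map_smul' c a := smul_lie c a v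

/-- The tangent space `q·v = {s·v : s ∈ q}` of the orbit of `v`. -/
def orbit (v : M) : Submodule k M := LinearMap.range (actAt k L M v)

/-- The stabiliser subalgebra `q_v = {s ∈ q : s·v = 0}`. -/
def stab (v : M) : LieSubalgebra k L where
  carrier := {s | ⁅s, v⁆ = 0}
  add_mem' := by intro a b ha hb; simp only [Set.mem_setOf_eq, add_lie] at *; rw [ha, hb, add_zero]
  zero_mem' := by simp
  smul_mem' := by intro c a ha; simp only [Set.mem_setOf_eq, smul_lie] at *; rw [ha, smul_zero]
  lie_mem' := by
    intro a b ha hb; simp only [Set.mem_setOf_eq, lie_lie] at *; rw [ha, hb]; simp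

/-- The index of the Lie module `M`:
`ind(q, M) = dim M − max_{ξ ∈ M*} dim q·ξ`, where the coadjoint action on the dual module
is `(s·ξ)(m) = −ξ(s·m)`. -/
noncomputable def lieIndex : ℕ :=
  finrank k M - ⨆ ξ : Module.Dual k M, finrank k (orbit k L (Module.Dual k M) ξ)

/-- `{s ∈ q : s·v = 0 and s·w ∈ q·v}`. -/
def relStab (v w : M) : Submodule k L where
  carrier := {s | ⁅s, v⁆ = 0 ∧ ⁅s, w⁆ ∈ orbit k L M v}
  add_mem' := by
    rintro a b ⟨ha1, ha2⟩ ⟨hb1, hb2⟩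
    exact ⟨by rw [add_lie, ha1, hb1, add_zero], by rw [add_lie]; exact add_mem ha2 hb2⟩
  zero_mem' := by constructor <;> simp
  smul_mem' := by
    rintro c a ⟨ha1, ha2⟩
    exact ⟨by rw [smul_lie, ha1, smul_zero], by rw [smul_lie]; exact Submodule.smul_mem _ c ha2⟩

/-- The orbit `q·v` as a Lie submodule over the stabiliser `q_v`. -/
def orbitLS (v : M) : LieSubmodule k ↥(stab k L M v) M :=
  { orbit k L M v with
    lie_mem := by
      rintro x m ⟨t, rfl⟩
      show ⁅(x : L), _⁆ ∈ orbit k L M v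
      have hx : ⁅(x : L), v⁆ = 0 := x.2
      have : ⁅(x : L), (actAt k L M v) t⁆ = actAt k L M v ⁅(x : L), t⁆ := by
        show ⁅(x : L), ⁅t, v⁆⁆ = ⁅⁅(x : L), t⁆, v⁆
        rw [lie_lie, hx, lie_zero, sub_zero]
      rw [this]
      exact ⟨_, rfl⟩ }

section helpers

theorem eigen_aux {k E : Type*} [Field k] [AddCommGroup E] [Module k E] {μ t : k} (hμ : μ ≠ 0)
    (ht : t = -μ⁻¹) {x y : E} (h : x + t • y = 0) : y = μ • x := by
  rw [ht, neg_smul, add_neg_eq_zero] at h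
  rw [h, smul_inv_smul₀ hμ]

theorem pencil_rank {k L M : Type*} [Field k] [Infinite k] [AddCommGroup L] [Module k L]
    [AddCommGroup M] [Module k M] [FiniteDimensional k L] [FiniteDimensional k M]
    (A B : L →ₗ[k] M) (R : Submodule k L)
    (hR : ∀ s, s ∈ R ↔ A s = 0 ∧ B s ∈ LinearMap.range A) :
    ∃ t : k, finrank k L ≤ finrank k (LinearMap.range (A + t • B)) + finrank k R := by
  obtain ⟨C, hC⟩ := Submodule.exists_isCompl (LinearMap.ker A)
  obtain ⟨D', hD⟩ := Submodule.exists_isCompl (R.comap (LinearMap.ker A).subtype)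
  have hRle : R ≤ LinearMap.ker A := fun s hs => ((hR s).1 hs).1
  have hd1 := Submodule.finrank_add_eq_of_isCompl hC
  have hd2 := Submodule.finrank_add_eq_of_isCompl hD
  have hd3 : finrank k (R.comap (LinearMap.ker A).subtype) = finrank k R :=
    (Submodule.comapSubtypeEquivOfLe hRle).finrank_eq
  let jD : D' →ₗ[k] L := (LinearMap.ker A).subtype ∘ₗ D'.subtype
  let F : (C × D') →ₗ[k] M := (A ∘ₗ C.subtype).coprod (B ∘ₗ jD)
  let G : (C × D') →ₗ[k] M := (B ∘ₗ C.subtype).coprod 0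
  have hF : LinearMap.ker F = ⊥ := by
    rw [LinearMap.ker_eq_bot']
    rintro ⟨c, d⟩ h
    have h' : A c + B (d : LinearMap.ker A) = 0 := h
    have hdR : ((d : LinearMap.ker A) : L) ∈ R := by
      refine (hR _).2 ⟨(d : LinearMap.ker A).2, -c, ?_⟩
      rw [map_neg]
      exact neg_eq_of_add_eq_zero_right h'
    have hd0 : (d : LinearMap.ker A) = 0 := by
      have := Submodule.disjoint_def.1 hD.disjoint (d : LinearMap.ker A) hdR d.2
      exact this
    have hc : A c = 0 := by simpa [hd0] using h'
    have hc0 : (c : L) = 0 := Submodule.disjoint_def.1 hC.disjoint c hc c.2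
    ext <;> simp [hd0, hc0]
  obtain ⟨P, hP⟩ := LinearMap.exists_leftInverse_of_injective F hF
  let N : Module.End k (C × D') := P ∘ₗ G
  have hfin : ({μ | Module.End.HasEigenvalue N μ} ∪ {0} : Set k).Finite :=
    (Module.End.finite_hasEigenvalue N).union (Set.finite_singleton 0)
  obtain ⟨μ, hμ⟩ := hfin.exists_notMem
  simp only [Set.mem_union, Set.mem_setOf_eq, Set.mem_singleton_iff, not_or] at hμ
  obtain ⟨hμ1, hμ0⟩ := hμ
  refine ⟨-μ⁻¹, ?_⟩
  set t : k := -μ⁻¹ with ht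
  let H : (C × D') →ₗ[k] L := C.subtype.coprod (t⁻¹ • jD)
  have ht0 : t ≠ 0 := by simp [ht, hμ0]
  have hcomp : (A + t • B) ∘ₗ H = F + t • G := by
    refine LinearMap.ext ?_
    rintro ⟨c, d⟩
    have hA : A (jD d) = 0 := (d : LinearMap.ker A).2
    simp only [H, F, G, LinearMap.comp_apply, LinearMap.coprod_apply, LinearMap.add_apply,
      LinearMap.smul_apply, map_add, map_smul, hA, Submodule.subtype_apply, LinearMap.zero_apply,
      smul_zero, add_zero, smul_add, smul_comm t t⁻¹, inv_smul_smul₀ ht0]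
    abel
  have hinj : Function.Injective ((A + t • B) ∘ₗ H) := by
    rw [hcomp, ← LinearMap.ker_eq_bot, LinearMap.ker_eq_bot']
    intro x hx
    by_contra hx0
    apply hμ1
    refine Module.End.hasEigenvalue_of_hasEigenvector (x := x) ⟨?_, hx0⟩
    rw [Module.End.mem_eigenspace_iff]
    have h1 : P (F x) = x := LinearMap.congr_fun hP x
    have h2 : P (F x + t • G x) = 0 := by
      have : F x + t • G x = 0 := hx
      rw [this, map_zero]
    rw [map_add, map_smul, h1] at h2
    exact eigen_aux hμ0 ht h2
  have hr := LinearMap.finrank_range_of_inj hinj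
  have hle := Submodule.finrank_mono (LinearMap.range_comp_le_range H (A + t • B))
  rw [Module.finrank_prod] at hr
  omega

theorem iSup_dual_dual [FiniteDimensional k M] :
    (⨆ ξ : Module.Dual k (Module.Dual k M),
      finrank k (orbit k L (Module.Dual k (Module.Dual k M)) ξ)) =
    ⨆ x : M, finrank k (orbit k L M x) := by
  symm
  refine Equiv.iSup_congr (Module.evalEquiv k M).toEquiv ?_
  intro x
  have : orbit k L (Module.Dual k (Module.Dual k M)) (Module.evalEquiv k M x) =
      (orbit k L M x).map (Module.evalEquiv k M).toLinearMap := by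
    unfold orbit
    rw [← LinearMap.range_comp]
    congr 1
    ext s f
    simp [actAt]
  change finrank k (orbit k L (Module.Dual k (Module.Dual k M)) (Module.evalEquiv k M x)) = _
  rw [this]
  exact LinearEquiv.finrank_map_eq (Module.evalEquiv k M) _

theorem finrank_orbit_add_stab [FiniteDimensional k L] (x : M) :
    finrank k (orbit k L M x) + finrank k (stab k L M x) = finrank k L :=
  LinearMap.finrank_range_add_finrank_ker (actAt k L M x)

theorem finrank_relStab [FiniteDimensional k L] (v w : M) :
    finrank k (orbit k (stab k L M v) (M ⧸ orbitLS k L M v)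
      (LieSubmodule.Quotient.mk w)) + finrank k (relStab k L M v w)
      = finrank k (stab k L M v) := by
  have h := LinearMap.finrank_range_add_finrank_ker
    (actAt k (stab k L M v) (M ⧸ orbitLS k L M v) (LieSubmodule.Quotient.mk w))
  have hle : relStab k L M v w ≤ (stab k L M v).toSubmodule := fun s hs => hs.1
  have e : LinearMap.ker (actAt k (stab k L M v) (M ⧸ orbitLS k L M v)
      (LieSubmodule.Quotient.mk w)) =
      (relStab k L M v w).comap (stab k L M v).toSubmodule.subtype := by
    ext s
    have h1 : actAt k (stab k L M v) (M ⧸ orbitLS k L M v) (LieSubmodule.Quotient.mk w) s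
        = LieSubmodule.Quotient.mk ⁅s, w⁆ := rfl
    rw [LinearMap.mem_ker, h1]
    refine (LieSubmodule.Quotient.mk_eq_zero (N := orbitLS k L M v)).trans ?_
    exact ⟨fun h => ⟨s.2, h⟩, fun h => h.2⟩
  rw [e] at h
  rw [← h]
  congr 1
  exact (Submodule.comapSubtypeEquivOfLe hle).finrank_eq.symm

theorem exists_good [CharZero k] [FiniteDimensional k L] [FiniteDimensional k M] (v w : M) :
    ∃ x : M, finrank k L ≤ finrank k (orbit k L M x) + finrank k (relStab k L M v w) := by
  obtain ⟨t, ht⟩ := pencil_rank (actAt k L M v) (actAt k L M w) (relStab k L M v w)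
    (fun s => Iff.rfl)
  refine ⟨v + t • w, ?_⟩
  have : actAt k L M (v + t • w) = actAt k L M v + t • actAt k L M w := by
    ext s
    simp [actAt]
  unfold orbit
  rwa [this]

end helpers

/-- **Vinberg's inequality.** -/
theorem vinberg_inequality [IsAlgClosed k] [CharZero k]
    [FiniteDimensional k L] [FiniteDimensional k M] (v : M) :
    ((⨅ x : M, finrank k (stab k L M x)) ≤ ⨅ w : M, finrank k (relStab k L M v w)) ∧
    lieIndex k L (Module.Dual k M) ≤
      lieIndex k ↥(stab k L M v) (Module.Dual k (M ⧸ orbitLS k L M v)) := by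
  have hS : ∀ x : M, finrank k (orbit k L M x) ≤ ⨆ x : M, finrank k (orbit k L M x) :=
    fun x => le_ciSup (f := fun x : M => finrank k (orbit k L M x))
      ⟨finrank k M, by rintro _ ⟨y, rfl⟩; exact Submodule.finrank_le _⟩ x
  constructor
  · refine le_ciInf fun w => ?_
    obtain ⟨x, hx⟩ := exists_good k L M v w
    have h1 := finrank_orbit_add_stab k L M x
    have h2 : (⨅ x : M, finrank k (stab k L M x)) ≤ finrank k (stab k L M x) :=
      ciInf_le (OrderBot.bddBelow _) x
    omega
  · unfold lieIndex
    rw [iSup_dual_dual, iSup_dual_dual, Subspace.dual_finrank_eq, Subspace.dual_finrank_eq]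
    have hq : finrank k (M ⧸ orbitLS k L M v) + finrank k (orbit k L M v) = finrank k M :=
      Submodule.finrank_quotient_add_finrank (orbit k L M v)
    have hv := finrank_orbit_add_stab k L M v
    have hT : (⨆ y : M ⧸ orbitLS k L M v,
        finrank k (orbit k (stab k L M v) (M ⧸ orbitLS k L M v) y)) ≤
        (⨆ x : M, finrank k (orbit k L M x)) - finrank k (orbit k L M v) := by
      refine ciSup_le fun y => ?_
      obtain ⟨w, rfl⟩ := LieSubmodule.Quotient.surjective_mk' (orbitLS k L M v) y
      obtain ⟨x, hx⟩ := exists_good k L M v w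
      have h1 := finrank_relStab k L M v w
      have h2 := hS x
      change finrank k (orbit k (stab k L M v) (M ⧸ orbitLS k L M v)
        (LieSubmodule.Quotient.mk w)) ≤ _
      omega
    have h3 := hS v
    omega

end Stmt
end

section
/- Let k be an algebraically closed field of characteristic zero, q a finite-dimensional Lie algebra over k, V a finite-dimensional q-module, and v ∈ V. If dim q·v = max_{x ∈ V} dim q·x (the tangent space of the orbit of v has maximal dimension), then s·w ∈ q·v for every s ∈ q_v and every w ∈ V (i.e., q_v acts trivially on V/q·v), and consequently ind(q_v, (V/q·v)*) = ind(q, V*). -/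
/-!
If the orbit of `v` has maximal dimension, then the stabiliser `q_v` acts trivially on
the quotient `V/q.v` and `ind(q_v, (V/q.v)^*) = ind(q, V^*)`.
-/

open Module

namespace Stmt

variable (k : Type*) [Field k]
variable (L : Type*) [LieRing L] [LieAlgebra k L]
variable (M : Type*) [AddCommGroup M] [Module k M] [LieRingModule L M] [LieModule k L M]

theorem exists_injective_add_smul {k U W : Type*} [Field k] [Infinite k] [AddCommGroup U] [Module k U]
    [FiniteDimensional k U] [AddCommGroup W] [Module k W] (A B : U →ₗ[k] W)
    (hA : Function.Injective A) : ∃ t : k, t ≠ 0 ∧ Function.Injective (A + t • B) := by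
  obtain ⟨P, hP⟩ := A.exists_leftInverse_of_injective (LinearMap.ker_eq_bot.mpr hA)
  have hfin : {μ : k | Module.End.HasEigenvalue (P ∘ₗ B) μ}.Finite :=
    Module.End.finite_hasEigenvalue (P ∘ₗ B)
  obtain ⟨μ, hμ⟩ := (hfin.insert 0).exists_notMem
  simp only [Set.mem_insert_iff, Set.mem_setOf_eq, not_or] at hμ
  obtain ⟨hμ0, hμ⟩ := hμ
  refine ⟨-μ⁻¹, neg_ne_zero.mpr (inv_ne_zero hμ0), ?_⟩
  rw [injective_iff_map_eq_zero]
  intro u hu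
  by_contra hu0
  apply hμ
  have h1 : P (A u) = u := LinearMap.congr_fun hP u
  have h2 : P ((A + (-μ⁻¹) • B) u) = 0 := by rw [hu, map_zero]
  simp only [LinearMap.add_apply, LinearMap.smul_apply, map_add, map_smul, h1] at h2
  have h3 : u = μ⁻¹ • P (B u) := by
    rw [neg_smul] at h2
    exact add_neg_eq_zero.mp h2
  refine Module.End.hasEigenvalue_of_hasEigenvector (x := u) ⟨?_, hu0⟩
  rw [Module.End.mem_eigenspace_iff, LinearMap.comp_apply]
  conv_rhs => rw [h3]
  rw [smul_smul, mul_inv_cancel₀ hμ0, one_smul]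

theorem lie_mem_orbit_of_max [Infinite k] [FiniteDimensional k L] [FiniteDimensional k M] (v : M)
    (hmax : ∀ x : M, finrank k (orbit k L M x) ≤ finrank k (orbit k L M v))
    (s : L) (hs : ⁅s, v⁆ = 0) (w : M) : ⁅s, w⁆ ∈ orbit k L M v := by
  by_contra hsw
  obtain ⟨K, hK⟩ := (LinearMap.ker (actAt k L M v)).exists_isCompl
  let A : (K × k) →ₗ[k] M :=
    ((actAt k L M v).comp K.subtype).coprod (LinearMap.toSpanSingleton k M ⁅s, w⁆)
  let B : (K × k) →ₗ[k] M := ((actAt k L M w).comp K.subtype).comp (LinearMap.fst k K k)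
  have hAa : ∀ x c, A (x, c) = ⁅(x : L), v⁆ + c • ⁅s, w⁆ := fun x c => by
    simp [A, actAt]
  have hBa : ∀ x c, B (x, c) = ⁅(x : L), w⁆ := fun x c => by simp [B, actAt]
  have hA : Function.Injective A := by
    rw [injective_iff_map_eq_zero]
    rintro ⟨x, c⟩ h
    rw [hAa] at h
    have hc : c = 0 := by
      by_contra hc
      apply hsw
      have : ⁅s, w⁆ = actAt k L M v ((-c⁻¹) • (x : L)) := by
        show ⁅s, w⁆ = ⁅(-c⁻¹) • (x : L), v⁆
        rw [smul_lie, eq_neg_of_add_eq_zero_left h, smul_neg, neg_smul, neg_neg, smul_smul,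
          inv_mul_cancel₀ hc, one_smul]
      rw [this]
      exact ⟨_, rfl⟩
    subst hc
    rw [zero_smul, add_zero] at h
    have hx : (x : L) ∈ LinearMap.ker (actAt k L M v) ⊓ K := ⟨h, x.2⟩
    rw [hK.inf_eq_bot, Submodule.mem_bot] at hx
    ext <;> simp [hx]
  obtain ⟨t, ht, hinj⟩ := exists_injective_add_smul A B hA
  have hr : LinearMap.range (A + t • B) ≤ orbit k L M (v + t • w) := by
    rintro _ ⟨⟨x, c⟩, rfl⟩
    refine ⟨(x : L) + (c * t⁻¹) • s, ?_⟩
    show ⁅(x : L) + (c * t⁻¹) • s, v + t • w⁆ = _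
    rw [LinearMap.add_apply, LinearMap.smul_apply, hAa, hBa]
    simp only [add_lie, lie_add, smul_lie, lie_smul, hs, smul_zero, add_zero, smul_add, smul_smul]
    rw [mul_left_comm, mul_inv_cancel₀ ht, mul_one]
    abel
  have h1 := Submodule.finrank_mono hr
  rw [LinearMap.finrank_range_of_inj hinj, Module.finrank_prod, Module.finrank_self] at h1
  have h2 := Submodule.finrank_add_eq_of_isCompl hK
  have h3 := (actAt k L M v).finrank_range_add_finrank_ker
  have h4 := hmax (v + t • w)
  unfold orbit at *
  omega

theorem finrank_orbit_eval [FiniteDimensional k M] (x : M) :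
    finrank k (orbit k L (Module.Dual k (Module.Dual k M)) (Module.evalEquiv k M x)) =
      finrank k (orbit k L M x) := by
  have : orbit k L (Module.Dual k (Module.Dual k M)) (Module.evalEquiv k M x) =
      (orbit k L M x).map (Module.evalEquiv k M).toLinearMap := by
    unfold orbit
    rw [← LinearMap.range_comp]
    congr 1
    ext s f
    simp [actAt]
  rw [this]
  exact LinearEquiv.finrank_map_eq _ _

theorem lieIndex_dual [FiniteDimensional k M] :
    lieIndex k L (Module.Dual k M) = finrank k M - ⨆ x : M, finrank k (orbit k L M x) := by
  unfold lieIndex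
  rw [Subspace.dual_finrank_eq, ← (Module.evalEquiv k M).surjective.iSup_comp]
  simp only [finrank_orbit_eval]

/-- If `dim q·v` is maximal, then `q_v` acts trivially on `V/q·v` and the index of
`(V/q·v)*` over `q_v` equals the index of `V*` over `q`. -/
theorem index_eq_of_max_orbit [IsAlgClosed k] [CharZero k]
    [FiniteDimensional k L] [FiniteDimensional k M] (v : M)
    (hmax : finrank k (orbit k L M v) = ⨆ x : M, finrank k (orbit k L M x)) :
    (∀ s : L, s ∈ stab k L M v → ∀ w : M, ⁅s, w⁆ ∈ orbit k L M v) ∧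
    lieIndex k ↥(stab k L M v) (Module.Dual k (M ⧸ orbitLS k L M v)) =
      lieIndex k L (Module.Dual k M) := by
  have hbdd : BddAbove (Set.range fun x : M => finrank k (orbit k L M x)) :=
    ⟨finrank k M, by rintro _ ⟨x, rfl⟩; exact Submodule.finrank_le _⟩
  have hle : ∀ x : M, finrank k (orbit k L M x) ≤ finrank k (orbit k L M v) := fun x => by
    rw [hmax]; exact le_ciSup hbdd x
  have htriv : ∀ s : L, s ∈ stab k L M v → ∀ w : M, ⁅s, w⁆ ∈ orbit k L M v :=
    fun s hs w => lie_mem_orbit_of_max k L M v hle s hs w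
  refine ⟨htriv, ?_⟩
  have hz : ∀ x : M ⧸ orbitLS k L M v,
      finrank k (orbit k (stab k L M v) (M ⧸ orbitLS k L M v) x) = 0 := by
    intro x
    have : orbit k (stab k L M v) (M ⧸ orbitLS k L M v) x = ⊥ := by
      unfold orbit
      rw [LinearMap.range_eq_bot]
      ext s
      obtain ⟨w, rfl⟩ := LieSubmodule.Quotient.surjective_mk' (orbitLS k L M v) x
      show ⁅s, LieSubmodule.Quotient.mk' (orbitLS k L M v) w⁆ = 0
      rw [← LieModuleHom.map_lie]
      exact (LieSubmodule.Quotient.mk_eq_zero' ).mpr (htriv s s.2 w)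
    rw [this, finrank_bot]
  have hd := (orbit k L M v).finrank_quotient_add_finrank
  have hd' : finrank k (M ⧸ orbitLS k L M v) = finrank k (M ⧸ orbit k L M v) := rfl
  haveI : FiniteDimensional k (M ⧸ orbitLS k L M v) :=
    inferInstanceAs (FiniteDimensional k (M ⧸ orbit k L M v))
  rw [lieIndex_dual, lieIndex_dual, ← hmax, hd']
  simp only [hz, ciSup_const]
  omega

end Stmt
end

section
/- Let k be a field of characteristic zero, q a finite-dimensional Lie algebra over k, and V, W finite-dimensional q-modules. Assume that for every v ∈ V there exists v₀ ∈ V such that {s ∈ q : s·v = 0 and s·v₀ ∈ q·v} = 0. Then for every (w,v) ∈ W ⊕ V there exists u₀ ∈ W ⊕ V such that {s ∈ q : s·(w,v) = 0 and s·u₀ ∈ q·(w,v)} = 0; consequently ind(q_{(w,v)}, ((W⊕V)/q·(w,v))*) = dim V + dim W − dim q for every (w,v), so W ⊕ V has good index behaviour and ind(q, (V ⊕ W)*) = dim V + dim W − dim q. -/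
/-!
If `V` has good index behaviour witnessed by generic trivial relative stabilisers, then
`W ⊕ V` has good index behaviour for every module `W`, and
`ind(q, (V ⊕ W)*) = dim V + dim W − dim q`.
-/

open Module

namespace Stmt

variable (k : Type*) [Field k]
variable (L : Type*) [LieRing L] [LieAlgebra k L]
variable (M : Type*) [AddCommGroup M] [Module k M] [LieRingModule L M] [LieModule k L M]

variable (N : Type*) [AddCommGroup N] [Module k N] [LieRingModule L N] [LieModule k L N]

/-- The componentwise Lie module structure on `M × N`. -/
instance instLieRingModuleProd : LieRingModule L (M × N) where
  bracket s p := (⁅s, p.1⁆, ⁅s, p.2⁆)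
  add_lie x y p := Prod.ext (add_lie x y p.1) (add_lie x y p.2)
  lie_add x p q := Prod.ext (lie_add x p.1 q.1) (lie_add x p.2 q.2)
  leibniz_lie x y p := Prod.ext (leibniz_lie x y p.1) (leibniz_lie x y p.2)

instance instLieModuleProd : LieModule k L (M × N) where
  smul_lie t x p := Prod.ext (smul_lie t x p.1) (smul_lie t x p.2)
  lie_smul t x p := Prod.ext (lie_smul t x p.1) (lie_smul t x p.2)

theorem index_of_free {k : Type*} [Field k] {L : Type*} [LieRing L] [LieAlgebra k L]
    [FiniteDimensional k L] (M : Type*) [AddCommGroup M] [Module k M] [LieRingModule L M]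
    [LieModule k L M] [FiniteDimensional k M] (u : M) (hu : ∀ s : L, ⁅s, u⁆ = 0 → s = 0) :
    lieIndex k L (Module.Dual k M) = finrank k M - finrank k L := by
  have hle : ∀ ξ : Module.Dual k (Module.Dual k M),
      finrank k (orbit k L (Module.Dual k (Module.Dual k M)) ξ) ≤ finrank k L :=
    fun ξ => LinearMap.finrank_range_le _
  have hinj : Function.Injective
      (actAt k L (Module.Dual k (Module.Dual k M)) (Module.Dual.eval k M u)) := by
    rw [← LinearMap.ker_eq_bot, LinearMap.ker_eq_bot']
    intro s hs
    apply hu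
    rw [← Module.forall_dual_apply_eq_zero_iff k]
    intro f
    have h1 : (⁅s, Module.Dual.eval k M u⁆ : Module.Dual k (Module.Dual k M)) f = 0 := by
      have : (⁅s, Module.Dual.eval k M u⁆ : Module.Dual k (Module.Dual k M)) = 0 := hs
      rw [this]; rfl
    simpa [LieHom.lie_apply, LieModule.toEnd_apply_apply] using h1
  have hsup : (⨆ ξ : Module.Dual k (Module.Dual k (M)),
      finrank k (orbit k L (Module.Dual k (Module.Dual k M)) ξ)) = finrank k L := by
    apply le_antisymm (ciSup_le hle)
    have h2 : finrank k (orbit k L (Module.Dual k (Module.Dual k M)) (Module.Dual.eval k M u))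
        = finrank k L := LinearMap.finrank_range_of_inj hinj
    rw [← h2]
    exact le_ciSup (f := fun ξ : Module.Dual k (Module.Dual k M) =>
      finrank k (orbit k L (Module.Dual k (Module.Dual k M)) ξ))
      ⟨finrank k L, by rintro _ ⟨ξ, rfl⟩; exact hle ξ⟩ _
  rw [lieIndex, hsup, Subspace.dual_finrank_eq]

/-- Adding any module to a module with good index behaviour and index
`dim V − dim q` preserves good index behaviour. -/
theorem gib_sum {k : Type*} [Field k] [CharZero k]
    {L : Type*} [LieRing L] [LieAlgebra k L] [FiniteDimensional k L]
    (V W : Type*) [AddCommGroup V] [Module k V] [LieRingModule L V] [LieModule k L V]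
    [FiniteDimensional k V]
    [AddCommGroup W] [Module k W] [LieRingModule L W] [LieModule k L W]
    [FiniteDimensional k W]
    (hV : ∀ v : V, ∃ v₀ : V, relStab k L V v v₀ = ⊥) :
    (∀ p : W × V, ∃ u₀ : W × V, relStab k L (W × V) p u₀ = ⊥) ∧
    (∀ p : W × V,
      lieIndex k ↥(stab k L (W × V) p) (Module.Dual k ((W × V) ⧸ orbitLS k L (W × V) p)) =
        finrank k V + finrank k W - finrank k L) ∧
    lieIndex k L (Module.Dual k (W × V)) = finrank k V + finrank k W - finrank k L := by
  have h1 : ∀ p : W × V, ∃ u₀ : W × V, relStab k L (W × V) p u₀ = ⊥ := by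
    intro p
    obtain ⟨v₀, hv₀⟩ := hV p.2
    refine ⟨(0, v₀), ?_⟩
    rw [eq_bot_iff]
    rintro s ⟨hs1, t, ht⟩
    rw [← hv₀]
    exact ⟨congrArg Prod.snd hs1, t, congrArg Prod.snd ht⟩
  refine ⟨h1, ?_, ?_⟩
  · intro p
    obtain ⟨u₀, hu₀⟩ := h1 p
    have hfd : FiniteDimensional k ((W × V) ⧸ orbitLS k L (W × V) p) :=
      inferInstanceAs (FiniteDimensional k ((W × V) ⧸ orbit k L (W × V) p))
    have hfs : FiniteDimensional k ↥(stab k L (W × V) p) :=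
      inferInstanceAs (FiniteDimensional k ↥(stab k L (W × V) p).toSubmodule)
    rw [index_of_free (k := k) (L := ↥(stab k L (W × V) p))
      ((W × V) ⧸ orbitLS k L (W × V) p) (LieSubmodule.Quotient.mk u₀)]
    · have e1 : finrank k ((W × V) ⧸ orbitLS k L (W × V) p) + finrank k (orbit k L (W × V) p)
          = finrank k (W × V) := Submodule.finrank_quotient_add_finrank (orbit k L (W × V) p)
      have e2 : finrank k (orbit k L (W × V) p) + finrank k ↥(stab k L (W × V) p)
          = finrank k L := by
        have := LinearMap.finrank_range_add_finrank_ker (actAt k L (W × V) p)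
        exact this
      rw [finrank_prod] at e1
      omega
    · intro s hs
      have h2 : (s : L) ∈ relStab k L (W × V) p u₀ := by
        refine ⟨s.2, ?_⟩
        exact (LieSubmodule.Quotient.mk_eq_zero' (N := orbitLS k L (W × V) p)).1 hs
      rw [hu₀] at h2
      exact Subtype.ext h2
  · obtain ⟨u₀, hu₀⟩ := h1 0
    rw [index_of_free (W × V) u₀, finrank_prod, add_comm]
    intro s hs
    have h2 : s ∈ relStab k L (W × V) 0 u₀ := by
      refine ⟨lie_zero s, ?_⟩
      rw [hs]; exact zero_mem _
    rw [hu₀] at h2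
    exact h2

end Stmt
end

section
/- Let k be an algebraically closed field of characteristic zero, q a finite-dimensional abelian Lie algebra over k, and V a finite-dimensional q-module such that V is spanned by simultaneous eigenvectors of q, i.e., V = ⊕_{λ ∈ q*} V_λ where V_λ := {x ∈ V : s·x = λ(s)x for all s ∈ q} (this is the Lie algebra analogue of a representation of an algebraic torus). Then V has good index behaviour: for every v ∈ V, min_{w ∈ V} dim {s ∈ q : s·v = 0 and s·w ∈ q·v} = min_{x ∈ V} dim q_x, i.e., ind(q_v, (V/q·v)*) = ind(q, V*). -/
/-!
Any module over an abelian Lie algebra that is spanned by simultaneous eigenvectors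
(the Lie-algebra analogue of a representation of an algebraic torus) has good index
behaviour.
-/

open Module

namespace Stmt

variable (k : Type*) [Field k]
variable (L : Type*) [LieRing L] [LieAlgebra k L]
variable (M : Type*) [AddCommGroup M] [Module k M] [LieRingModule L M] [LieModule k L M]

theorem finrank_orbit_add (v : M) [FiniteDimensional k L] :
    finrank k (orbit k L M v) + finrank k (LinearMap.ker (actAt k L M v)) = finrank k L :=
  LinearMap.finrank_range_add_finrank_ker _

theorem orbit_eval (m : M) :
    orbit k L (Module.Dual k (Module.Dual k M)) (Module.Dual.eval k M m) =
      (orbit k L M m).map (Module.Dual.eval k M) := by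
  rw [orbit, orbit, ← LinearMap.range_comp]
  congr 1
  ext s ξ
  simp [actAt]

theorem iSup_dual_orbit [FiniteDimensional k M] :
    (⨆ ξ : Module.Dual k (Module.Dual k M),
      finrank k (orbit k L (Module.Dual k (Module.Dual k M)) ξ)) =
      ⨆ m : M, finrank k (orbit k L M m) := by
  symm
  refine Equiv.iSup_congr (Module.evalEquiv k M).toEquiv ?_
  intro m
  have h : (Module.evalEquiv k M).toEquiv m = Module.Dual.eval k M m := rfl
  rw [h, orbit_eval]
  exact (LinearEquiv.finrank_eq (Submodule.equivMapOfInjective (Module.Dual.eval k M)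
    (Module.evalEquiv k M).injective _)).symm

theorem iSup_orbit_eq [FiniteDimensional k L] (m₀ : M) (d : ℕ)
    (h₀ : finrank k (orbit k L M m₀) = d)
    (h : ∀ m : M, finrank k (orbit k L M m) ≤ d) :
    (⨆ m : M, finrank k (orbit k L M m)) = d := by
  apply le_antisymm
  · exact ciSup_le h
  · rw [← h₀]
    exact le_ciSup (f := fun m : M => finrank k (orbit k L M m))
      ⟨d, by rintro _ ⟨m, rfl⟩; exact h m⟩ m₀

theorem iInf_eq_of_min {α : Type*} (f : α → ℕ) (a : α) (h : ∀ b, f a ≤ f b) :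
    (⨅ b, f b) = f a := by
  have : Nonempty α := ⟨a⟩
  exact le_antisymm (ciInf_le (OrderBot.bddBelow _) a) (le_ciInf h)

theorem map_ker_quot (v w : M) :
    (LinearMap.ker (actAt k ↥(stab k L M v) (M ⧸ orbitLS k L M v)
      (LieSubmodule.Quotient.mk w))).map (stab k L M v).toSubmodule.subtype =
      relStab k L M v w := by
  ext s
  constructor
  · rintro ⟨(t : stab k L M v), ht, rfl⟩
    refine ⟨t.2, ?_⟩
    have ht' : (LieSubmodule.Quotient.mk ⁅(t : stab k L M v), w⁆ : M ⧸ orbitLS k L M v) = 0 := ht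
    rw [LieSubmodule.Quotient.mk_eq_zero'] at ht'
    exact ht'
  · rintro ⟨h1, h2⟩
    refine ⟨⟨s, h1⟩, ?_, rfl⟩
    show (LieSubmodule.Quotient.mk ⁅(⟨s, h1⟩ : stab k L M v), w⁆ : M ⧸ orbitLS k L M v) = 0
    rw [LieSubmodule.Quotient.mk_eq_zero']
    exact h2

theorem finrank_orbit_quot [FiniteDimensional k L] (v w : M) :
    finrank k (orbit k ↥(stab k L M v) (M ⧸ orbitLS k L M v) (LieSubmodule.Quotient.mk w)) +
      finrank k (relStab k L M v w) = finrank k (stab k L M v) := by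
  have h := finrank_orbit_add k ↥(stab k L M v) (M ⧸ orbitLS k L M v)
    (LieSubmodule.Quotient.mk w)
  have h2 := LinearEquiv.finrank_eq (Submodule.equivMapOfInjective _
    (Submodule.subtype_injective (stab k L M v).toSubmodule)
    (LinearMap.ker (actAt k ↥(stab k L M v) (M ⧸ orbitLS k L M v)
      (LieSubmodule.Quotient.mk w))))
  rw [map_ker_quot] at h2
  rw [← h2]
  exact h

theorem finrank_orbit_stab [FiniteDimensional k L] (v : M) :
    finrank k (orbit k L M v) + finrank k (stab k L M v) = finrank k L :=
  finrank_orbit_add k L M v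

/-- Existence of a generic vector. -/
theorem exists_generic [FiniteDimensional k M]
    (hspan : Submodule.span k
      {x : M | ∃ χ : Module.Dual k L, ∀ s : L, ⁅s, x⁆ = χ s • x} = ⊤) :
    ∃ w : M, (∀ s : L, ⁅s, w⁆ = 0 → ∀ x : M, ⁅s, x⁆ = 0) ∧
      ∀ v : M, ∀ s ∈ relStab k L M v w, ∀ x : M, ⁅s, x⁆ = 0 := by
  classical
  let b := Module.Basis.ofSpan hspan.ge
  have hb : ∀ i, ∃ χ : Module.Dual k L, ∀ s : L, ⁅s, b i⁆ = χ s • b i := fun i =>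
    Module.Basis.ofSpan_subset hspan.ge ⟨i, rfl⟩
  choose χ hχ using hb
  have : Fintype _ := FiniteDimensional.fintypeBasisIndex b
  have key : ∀ (s : L) (x : M) i, b.repr ⁅s, x⁆ i = χ i s * b.repr x i := by
    intro s x i
    conv_lhs => rw [← b.sum_repr x]
    simp only [lie_sum, lie_smul, hχ, map_sum, map_smul, Module.Basis.repr_self,
      Finsupp.coe_finset_sum, Finset.sum_apply, Finsupp.smul_apply, Finsupp.single_apply,
      smul_eq_mul, mul_ite, mul_one, mul_zero, Finset.sum_ite_eq', Finset.mem_univ, if_true]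
    ring
  have key0 : ∀ s : L, (∀ i, χ i s = 0) → ∀ x : M, ⁅s, x⁆ = 0 := by
    intro s hs x
    apply b.repr.injective
    ext i
    simp [key, hs]
  have hw : ∀ i, b.repr (∑ j, b j) i = 1 := by
    intro i
    simp [Finsupp.single_apply]
  refine ⟨∑ j, b j, ?_, ?_⟩
  · intro s hs
    apply key0
    intro i
    have := key s (∑ j, b j) i
    rw [hs, hw] at this
    simpa using this.symm
  · rintro v s ⟨h1, t, ht⟩
    have ht : ⁅t, v⁆ = ⁅s, ∑ j, b j⁆ := ht
    apply key0
    intro i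
    have e1 := key s v i
    have e2 := key s (∑ j, b j) i
    rw [← ht, key, hw, mul_one] at e2
    rw [h1] at e1
    by_cases hv : b.repr v i = 0
    · rw [← e2, hv, mul_zero]
    · have : χ i s * b.repr v i = 0 := by rw [← e1]; simp
      exact (mul_eq_zero.mp this).resolve_right hv

/-- A representation of a "torus" has good index behaviour. -/
theorem torus_gib [IsAlgClosed k] [CharZero k]
    [FiniteDimensional k L] [FiniteDimensional k M] [IsLieAbelian L]
    (hspan : Submodule.span k
      {x : M | ∃ χ : Module.Dual k L, ∀ s : L, ⁅s, x⁆ = χ s • x} = ⊤) :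
    ∀ v : M,
      ((⨅ w : M, finrank k (relStab k L M v w)) = ⨅ x : M, finrank k (stab k L M x)) ∧
      lieIndex k ↥(stab k L M v) (Module.Dual k (M ⧸ orbitLS k L M v)) =
        lieIndex k L (Module.Dual k M) := by
  intro v
  obtain ⟨w, hw1, hw2⟩ := exists_generic k L M hspan
  have hst : ∀ x : M, (stab k L M w).toSubmodule ≤ (stab k L M x).toSubmodule :=
    fun x s hs => hw1 s hs x
  have hst' : ∀ x : M, finrank k (stab k L M w) ≤ finrank k (stab k L M x) :=
    fun x => Submodule.finrank_mono (hst x)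
  have hrel : relStab k L M v w = (stab k L M w).toSubmodule :=
    le_antisymm (fun s hs => hw2 v s hs w) (fun s hs =>
      ⟨hw1 s hs v, by rw [hw1 s hs w]; exact zero_mem _⟩)
  have hrel' : ∀ x : M, finrank k (relStab k L M v w) ≤ finrank k (relStab k L M v x) := by
    intro x
    apply Submodule.finrank_mono
    intro s hs
    have h := hw2 v s hs
    exact ⟨h v, by rw [h x]; exact zero_mem _⟩
  have hd : finrank k (relStab k L M v w) = finrank k (stab k L M w) := by rw [hrel]; rfl
  refine ⟨?_, ?_⟩
  · rw [iInf_eq_of_min _ w hrel', iInf_eq_of_min _ w hst', hd]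
  · have hfd : FiniteDimensional k (M ⧸ orbitLS k L M v) :=
      inferInstanceAs (FiniteDimensional k (M ⧸ orbit k L M v))
    have hQ : finrank k (M ⧸ orbitLS k L M v) + finrank k (orbit k L M v) = finrank k M :=
      Submodule.finrank_quotient_add_finrank (orbit k L M v)
    unfold lieIndex
    rw [iSup_dual_orbit, iSup_dual_orbit, Subspace.dual_finrank_eq, Subspace.dual_finrank_eq]
    rw [iSup_orbit_eq k L M w _ rfl (fun m => by
      have h1 := finrank_orbit_stab k L M w
      have h2 := finrank_orbit_stab k L M m
      have h3 := hst' m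
      omega)]
    rw [iSup_orbit_eq k ↥(stab k L M v) (M ⧸ orbitLS k L M v)
      (LieSubmodule.Quotient.mk w) _ rfl (fun m => by
      obtain ⟨m, rfl⟩ := LieSubmodule.Quotient.surjective_mk' _ m
      have h1 := finrank_orbit_quot k L M v w
      have h2 := finrank_orbit_quot k L M v m
      have h3 := hrel' m
      change finrank k (orbit k ↥(stab k L M v) (M ⧸ orbitLS k L M v)
        (LieSubmodule.Quotient.mk m)) ≤ _
      omega)]
    have h1 := finrank_orbit_quot k L M v w
    have h2 := finrank_orbit_stab k L M v
    have h3 := finrank_orbit_stab k L M w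
    omega

end Stmt
end

section
/- Let k be an algebraically closed field of characteristic zero, V a 2n-dimensional k-vector space with a nondegenerate alternating bilinear form B, and V = V₊ ⊕ V₋ a decomposition into two Lagrangian (n-dimensional totally isotropic) subspaces. Let σ ∈ GL(V) be the involution with σ|_{V₊} = id and σ|_{V₋} = −id, and let e ∈ End(V) be a nilpotent endomorphism with B(e·v,w) + B(v,e·w) = 0 for all v,w (e ∈ sp(V,B)) and σeσ = −e (so e maps V₊ into V₋ and V₋ into V₊). Set m := dim Ker(e). Then there exist cyclic vectors w₁,…,w_m ∈ V and integers d₁,…,d_m ≥ 0 with e^{d_i+1}·w_i = 0 and {e^s·w_i : 1 ≤ i ≤ m, 0 ≤ s ≤ d_i} a basis of V, such that: (i) there is an involution i ↦ i* of {1,…,m} with d_i = d_{i*}, with i = i* if and only if d_i is odd, and with B(V_i, V_j) = 0 whenever j ∉ {i, i*}; and (ii) σ(w_i) = ±w_i for every i. -/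
open Module

section Aux

variable {k V : Type*} [Field k] [AddCommGroup V] [Module k V]

/-- A submodule admitting an adapted system of cyclic vectors. -/
def Good (B : V →ₗ[k] V →ₗ[k] k) (σ e : Module.End k V) (W : Submodule k V) : Prop :=
  ∃ (ι : Type) (_ : Fintype ι) (w : ι → V) (d : ι → ℕ) (inv : ι → ι),
      (∀ i, (e ^ (d i + 1)) (w i) = 0) ∧
      LinearIndependent k
        (fun p : Σ i : ι, Fin (d i + 1) => (e ^ (p.2 : ℕ)) (w p.1)) ∧
      Submodule.span k
        (Set.range fun p : Σ i : ι, Fin (d i + 1) => (e ^ (p.2 : ℕ)) (w p.1)) = W ∧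
      (∀ i, inv (inv i) = i) ∧
      (∀ i, d (inv i) = d i) ∧
      (∀ i, inv i = i ↔ Odd (d i)) ∧
      (∀ i j : ι, j ≠ i → j ≠ inv i → ∀ s t : ℕ, s ≤ d i → t ≤ d j →
        B ((e ^ s) (w i)) ((e ^ t) (w j)) = 0) ∧
      (∀ i, σ (w i) = w i ∨ σ (w i) = -w i)

theorem Good.combine {B : V →ₗ[k] V →ₗ[k] k} {σ e : Module.End k V} {U W : Submodule k V}
    (hBalt : ∀ v w : V, B w v = -B v w)
    (hU : Good B σ e U) (hW : Good B σ e W) (hd : Disjoint U W)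
    (ho : ∀ x ∈ U, ∀ y ∈ W, B x y = 0) : Good B σ e (U ⊔ W) := by
  obtain ⟨ι, _, w, d, inv, h1, h2, h3, h4, h5, h6, h7, h8⟩ := hU
  obtain ⟨ι', _, w', d', inv', h1', h2', h3', h4', h5', h6', h7', h8'⟩ := hW
  have memU : ∀ i s, s ≤ d i → (e ^ s) (w i) ∈ U := by
    intro i s hs
    rw [← h3]
    exact Submodule.subset_span ⟨⟨i, ⟨s, by omega⟩⟩, rfl⟩
  have memW : ∀ i s, s ≤ d' i → (e ^ s) (w' i) ∈ W := by
    intro i s hs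
    rw [← h3']
    exact Submodule.subset_span ⟨⟨i, ⟨s, by omega⟩⟩, rfl⟩
  let E : (Σ i : ι ⊕ ι', Fin (Sum.elim d d' i + 1)) ≃
     (Σ i : ι, Fin (d i + 1)) ⊕ (Σ i : ι', Fin (d' i + 1)) :=
    Equiv.sumSigmaDistrib (fun i : ι ⊕ ι' => Fin (Sum.elim d d' i + 1))
  have hE : (fun p : Σ i : ι ⊕ ι', Fin (Sum.elim d d' i + 1) =>
      (e ^ (p.2 : ℕ)) (Sum.elim w w' p.1)) =
      (Sum.elim (fun p : Σ i : ι, Fin (d i + 1) => (e ^ (p.2 : ℕ)) (w p.1))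
        (fun p : Σ i : ι', Fin (d' i + 1) => (e ^ (p.2 : ℕ)) (w' p.1))) ∘ E := by
    funext p
    rcases p with ⟨i | i, s⟩ <;> rfl
  refine ⟨ι ⊕ ι', inferInstance, Sum.elim w w', Sum.elim d d', Sum.map inv inv', ?_, ?_, ?_,
    ?_, ?_, ?_, ?_, ?_⟩
  · rintro (i | i)
    · exact h1 i
    · exact h1' i
  · rw [hE, linearIndependent_equiv]
    exact h2.sum_type h2' (by rw [h3, h3']; exact hd)
  · rw [hE, E.surjective.range_comp, Set.Sum.elim_range, Submodule.span_union, h3, h3']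
  · rintro (i | i) <;> simp [h4, h4']
  · rintro (i | i) <;> simp [h5, h5']
  · rintro (i | i) <;> simp [h6, h6']
  · rintro (i | i) (j | j) hji hj s t hs ht
    · exact h7 i j (by simpa using hji) (by simpa using hj) s t hs ht
    · exact ho _ (memU i s hs) _ (memW j t ht)
    · change B ((e ^ s) (w' i)) ((e ^ t) (w j)) = 0
      rw [hBalt, ho _ (memU j t ht) _ (memW i s hs), neg_zero]
    · exact h7' i j (by simpa using hji) (by simpa using hj) s t hs ht
  · rintro (i | i)
    · exact h8 i
    · exact h8' i

theorem skew_pow {B : V →ₗ[k] V →ₗ[k] k} {e : Module.End k V}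
    (he : ∀ v w : V, B (e v) w + B v (e w) = 0) (s : ℕ) (v w : V) :
    B ((e ^ s) v) w = (-1) ^ s * B v ((e ^ s) w) := by
  induction s generalizing v w with
  | zero => simp
  | succ s ih =>
    rw [pow_succ' e s, Module.End.mul_apply, ← pow_succ' e s, pow_succ e s,
      Module.End.mul_apply, eq_neg_of_add_eq_zero_left (he ((e ^ s) v) w), ih]
    ring

/-- Key nondegeneracy computation. -/
theorem coeff_zero {B : V →ₗ[k] V →ₗ[k] k} {e : Module.End k V}
    (he : ∀ v w : V, B (e v) w + B v (e w) = 0)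
    {ι : Type} [Fintype ι] (w : ι → V) (d : ℕ) (h1 : ∀ i, (e ^ (d + 1)) (w i) = 0)
    (H : ∀ c : ι → k, (∀ j, ∑ i, c i * B ((e ^ d) (w i)) (w j) = 0) → ∀ i, c i = 0)
    (a : (Σ _ : ι, Fin (d + 1)) → k)
    (ha : ∀ j t, t ≤ d → B (∑ p, a p • (e ^ (p.2 : ℕ)) (w p.1)) ((e ^ t) (w j)) = 0) :
    ∀ p, a p = 0 := by
  have key : ∀ s (hs : s < d + 1), ∀ i, a ⟨i, ⟨s, hs⟩⟩ = 0 := by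
    intro s
    induction s using Nat.strong_induction_on with
    | _ s ih =>
    intro hs
    refine H _ ?_
    intro j
    have h := ha j (d - s) (by omega)
    have h' : B ((e ^ (d - s)) (∑ p, a p • (e ^ (p.2 : ℕ)) (w p.1))) (w j) = 0 := by
      rw [skew_pow he, h, mul_zero]
    rw [Fintype.sum_sigma] at h'
    simp only [map_sum, map_smul, LinearMap.sum_apply, LinearMap.smul_apply, smul_eq_mul] at h'
    rw [← h']
    refine Finset.sum_congr rfl fun i _ => ?_
    rw [Finset.sum_eq_single ⟨s, hs⟩]
    · rw [← Module.End.mul_apply, ← pow_add]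
      congr 4
      simp only
      rw [Nat.sub_add_cancel (by omega)]
    · rintro ⟨r, hr⟩ _ hne
      rcases lt_trichotomy r s with h | h | h
      · rw [ih r h hr i, zero_mul]
      · exact absurd (by simpa using h) hne
      · rw [← Module.End.mul_apply, ← pow_add]
        simp only
        rw [show d - s + r = (r - s - 1) + (d + 1) by omega, pow_add, Module.End.mul_apply, h1]
        simp
    · simp
  rintro ⟨i, s, hs⟩
  exact key s hs i

/-- A nondegenerate block splits off. -/
theorem block_split [FiniteDimensional k V] {B : V →ₗ[k] V →ₗ[k] k} {σ e : Module.End k V}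
    (hBalt : ∀ v w : V, B w v = -B v w)
    (he : ∀ v w : V, B (e v) w + B v (e w) = 0)
    (hσB : ∀ v w, B (σ v) (σ w) = - B v w) (hσσ : ∀ v, σ (σ v) = v)
    (hσe : ∀ v, σ (e v) = - e (σ v))
    (W : Submodule k V) (hWe : ∀ x ∈ W, e x ∈ W) (hWσ : ∀ x ∈ W, σ x ∈ W)
    (hnd : ∀ x ∈ W, (∀ y ∈ W, B x y = 0) → x = 0)
    (IH : ∀ W' : Submodule k V, finrank k W' < finrank k W → (∀ x ∈ W', e x ∈ W') →
      (∀ x ∈ W', σ x ∈ W') → (∀ x ∈ W', (∀ y ∈ W', B x y = 0) → x = 0) → Good B σ e W')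
    {ι : Type} [Fintype ι] [Nonempty ι] (w : ι → V) (d : ℕ) (inv : ι → ι) (hwW : ∀ i, w i ∈ W)
    (h1 : ∀ i, (e ^ (d + 1)) (w i) = 0)
    (H : ∀ c : ι → k, (∀ j, ∑ i, c i * B ((e ^ d) (w i)) (w j) = 0) → ∀ i, c i = 0)
    (hinv : ∀ i, inv (inv i) = i) (hodd : ∀ i, inv i = i ↔ Odd d)
    (hall : ∀ i j, j = i ∨ j = inv i)
    (hσw : ∀ i, σ (w i) = w i ∨ σ (w i) = - w i) : Good B σ e W := by
  set f : (Σ _ : ι, Fin (d + 1)) → V := fun p => (e ^ (p.2 : ℕ)) (w p.1) with hf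
  set U := Submodule.span k (Set.range f) with hUdef
  have hpow : ∀ s, ∀ x ∈ W, (e ^ s) x ∈ W := by
    intro s
    induction s with
    | zero => simp
    | succ s ih => intro x hx; rw [pow_succ, Module.End.mul_apply]; exact ih _ (hWe x hx)
  have hmem : ∀ i t, t ≤ d → (e ^ t) (w i) ∈ U := fun i t ht =>
    Submodule.subset_span ⟨⟨i, ⟨t, by omega⟩⟩, rfl⟩
  have hUW : U ≤ W := by
    rw [hUdef, Submodule.span_le]
    rintro _ ⟨p, rfl⟩
    exact hpow _ _ (hwW _)
  have hli : LinearIndependent k f := by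
    rw [Fintype.linearIndependent_iff]
    intro a ha
    refine coeff_zero he w d h1 H a ?_
    intro j t _
    simp only [hf] at ha
    rw [ha]; simp
  have hUnd : ∀ x ∈ U, (∀ y ∈ U, B x y = 0) → x = 0 := by
    intro x hx hxy
    obtain ⟨a, rfl⟩ := (Submodule.mem_span_range_iff_exists_fun k).1 hx
    have := coeff_zero he w d h1 H a (fun j t ht => hxy _ (hmem j t ht))
    simp [this]
  have hUe : ∀ x ∈ U, e x ∈ U := by
    suffices U ≤ U.comap e from fun x hx => this hx
    conv_lhs => rw [hUdef]
    rw [Submodule.span_le]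
    rintro _ ⟨⟨i, s, hs⟩, rfl⟩
    change e ((e ^ s) (w i)) ∈ U
    rw [← Module.End.mul_apply, ← pow_succ']
    by_cases h : s + 1 ≤ d
    · exact hmem i _ h
    · rw [show s = d by omega, h1]; exact U.zero_mem
  have hσpow : ∀ s x, σ ((e ^ s) x) = (-1 : k) ^ s • (e ^ s) (σ x) := by
    intro s
    induction s with
    | zero => simp
    | succ s ih =>
      intro x
      rw [pow_succ e s, Module.End.mul_apply, ih, hσe, map_neg, Module.End.mul_apply, pow_succ]
      simp
  have hUσ : ∀ x ∈ U, σ x ∈ U := by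
    suffices U ≤ U.comap σ from fun x hx => this hx
    conv_lhs => rw [hUdef]
    rw [Submodule.span_le]
    rintro _ ⟨⟨i, s, hs⟩, rfl⟩
    change σ ((e ^ s) (w i)) ∈ U
    rw [hσpow]
    refine U.smul_mem _ ?_
    have := hmem i s (by omega)
    rcases hσw i with h | h <;> rw [h]
    · exact this
    · rw [map_neg]; exact U.neg_mem this
  have hGU : Good B σ e U :=
    ⟨ι, inferInstance, w, fun _ => d, inv, h1, hli, rfl, hinv, fun _ => rfl, hodd,
      fun i j h h' => ((hall i j).elim h h').elim, hσw⟩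
  set O := LinearMap.BilinForm.orthogonal B U with hO
  have memO : ∀ x, x ∈ O ↔ ∀ y ∈ U, B y x = 0 := by
    intro x
    rw [hO, LinearMap.BilinForm.mem_orthogonal_iff]
  have hrefl : LinearMap.IsRefl B := by
    intro x y h
    rw [hBalt, h, neg_zero]
  have hc : IsCompl U O := by
    apply LinearMap.BilinForm.isCompl_orthogonal_of_restrict_nondegenerate hrefl
    refine (LinearMap.IsRefl.nondegenerate_iff_separatingLeft ?_).2 ?_
    · intro x y h
      exact hrefl _ _ h
    · rintro ⟨x, hx⟩ h
      exact Subtype.ext (hUnd x hx fun y hy => h ⟨y, hy⟩)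
  set W' := W ⊓ O with hW'
  have hsup : U ⊔ W' = W := by
    rw [hW', inf_comm, ← sup_inf_assoc_of_le _ hUW, hc.sup_eq_top, top_inf_eq]
  have hdis : Disjoint U W' := hc.disjoint.mono_right inf_le_right
  have hUne : U ≠ ⊥ := by
    intro h
    obtain ⟨i⟩ := ‹Nonempty ι›
    have h0 := hli.ne_zero ⟨i, 0⟩
    have : f ⟨i, 0⟩ ∈ U := Submodule.subset_span ⟨_, rfl⟩
    rw [h] at this
    exact h0 (by simpa using this)
  have hlt : W' < W := by
    refine lt_of_le_of_ne inf_le_left ?_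
    intro h
    rw [h] at hdis
    exact hUne (hdis.eq_bot_of_le hUW)
  have hGW : Good B σ e W' := by
    refine IH W' (Submodule.finrank_lt_finrank_of_lt hlt) ?_ ?_ ?_
    · rintro x ⟨hx, hx'⟩
      refine ⟨hWe x hx, (memO _).2 fun y hy => ?_⟩
      have := he y x
      rw [(memO _).1 hx' _ (hUe y hy), zero_add] at this
      exact this
    · rintro x ⟨hx, hx'⟩
      refine ⟨hWσ x hx, (memO _).2 fun y hy => ?_⟩
      rw [← hσσ y, hσB, (memO _).1 hx' _ (hUσ y hy), neg_zero]
    · rintro x ⟨hx, hx'⟩ h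
      refine hnd x hx ?_
      intro y hy
      rw [← hsup] at hy
      obtain ⟨u, hu, v, hv, rfl⟩ := Submodule.mem_sup.1 hy
      rw [map_add, h v hv, hBalt, (memO _).1 hx' u hu]
      simp
  rw [← hsup]
  exact hGU.combine hBalt hGW hdis (fun x hx y hy => (memO _).1 hy.2 x hx)

theorem good_of_nondeg [CharZero k] [FiniteDimensional k V] {B : V →ₗ[k] V →ₗ[k] k}
    {σ e : Module.End k V}
    (hBalt : ∀ v w : V, B w v = -B v w)
    (he : ∀ v w : V, B (e v) w + B v (e w) = 0) (hnil : IsNilpotent e)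
    (hσB : ∀ v w, B (σ v) (σ w) = - B v w) (hσσ : ∀ v, σ (σ v) = v)
    (hσe : ∀ v, σ (e v) = - e (σ v)) (N : ℕ) :
    ∀ (W : Submodule k V), finrank k W = N → (∀ x ∈ W, e x ∈ W) → (∀ x ∈ W, σ x ∈ W) →
    (∀ x ∈ W, (∀ y ∈ W, B x y = 0) → x = 0) → Good B σ e W := by
  induction N using Nat.strong_induction_on with
  | _ N ih =>
  intro W hN hWe hWσ hnd
  have IH : ∀ W' : Submodule k V, finrank k W' < finrank k W → (∀ x ∈ W', e x ∈ W') →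
      (∀ x ∈ W', σ x ∈ W') → (∀ x ∈ W', (∀ y ∈ W', B x y = 0) → x = 0) → Good B σ e W' :=
    fun W' h => ih _ (hN ▸ h) W' rfl
  by_cases hW : W = ⊥
  · subst hW
    refine ⟨Empty, inferInstance, Empty.elim, Empty.elim, Empty.elim, by simp, ?_, ?_, by simp,
      by simp, by simp, by simp, by simp⟩
    · exact linearIndependent_empty_type
    · simp
  have hpow : ∀ s, ∀ x ∈ W, (e ^ s) x ∈ W := by
    intro s
    induction s with
    | zero => simp
    | succ s ih => intro x hx; rw [pow_succ, Module.End.mul_apply]; exact ih _ (hWe x hx)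
  obtain ⟨d, hd1, x, hx, hxd⟩ : ∃ d, (∀ x ∈ W, (e ^ (d + 1)) x = 0) ∧
      ∃ x ∈ W, (e ^ d) x ≠ 0 := by
    classical
    have hex : ∃ M, ∀ x ∈ W, (e ^ M) x = 0 := by
      obtain ⟨M, hM⟩ := hnil
      exact ⟨M, fun x _ => by rw [hM]; rfl⟩
    have h0 : Nat.find hex ≠ 0 := by
      intro h
      have := Nat.find_spec hex
      rw [h] at this
      exact hW ((Submodule.eq_bot_iff _).2 fun x hx => by simpa using this x hx)
    obtain ⟨d, hd⟩ := Nat.exists_eq_succ_of_ne_zero h0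
    refine ⟨d, ?_, ?_⟩
    · have := Nat.find_spec hex
      rwa [hd] at this
    · have := Nat.find_min hex (m := d) (by omega)
      push Not at this
      exact this
  have hσpow : ∀ s x, σ ((e ^ s) x) = (-1 : k) ^ s • (e ^ s) (σ x) := by
    intro s
    induction s with
    | zero => simp
    | succ s ih =>
      intro x
      rw [pow_succ e s, Module.End.mul_apply, ih, hσe, map_neg, Module.End.mul_apply, pow_succ]
      simp
  obtain ⟨y, hy, hyx⟩ : ∃ y ∈ W, B ((e ^ d) x) y ≠ 0 := by
    by_contra! h
    exact hxd (hnd _ (hpow d x hx) h)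
  -- eigenvectors
  have hdec : ∀ x ∈ W, ∃ u ∈ W, ∃ v ∈ W, σ u = u ∧ σ v = -v ∧ x = u + v := by
    intro x hx
    refine ⟨(2⁻¹ : k) • (x + σ x), W.smul_mem _ (W.add_mem hx (hWσ x hx)),
      (2⁻¹ : k) • (x - σ x), W.smul_mem _ (W.sub_mem hx (hWσ x hx)), ?_, ?_, ?_⟩
    · rw [map_smul, map_add, hσσ, add_comm]
    · rw [map_smul, map_sub, hσσ, ← smul_neg, neg_sub]
    · rw [← smul_add, add_add_sub_cancel, ← two_smul k, smul_smul, inv_mul_cancel₀ two_ne_zero,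
        one_smul]
  obtain ⟨x, hx, y, hy, ε, δ, hε, hδ, hσx, hσy, hne⟩ : ∃ x ∈ W, ∃ y ∈ W, ∃ ε δ : k,
      (ε = 1 ∨ ε = -1) ∧ (δ = 1 ∨ δ = -1) ∧ σ x = ε • x ∧ σ y = δ • y ∧
      B ((e ^ d) x) y ≠ 0 := by
    obtain ⟨u, hu, v, hv, hσu, hσv, rfl⟩ := hdec x hx
    obtain ⟨u', hu', v', hv', hσu', hσv', rfl⟩ := hdec y hy
    by_contra! h
    have a1 := h u hu u' hu' 1 1 (.inl rfl) (.inl rfl) (by simpa using hσu) (by simpa using hσu')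
    have a2 := h u hu v' hv' 1 (-1) (.inl rfl) (.inr rfl) (by simpa using hσu)
      (by simpa using hσv')
    have a3 := h v hv u' hu' (-1) 1 (.inr rfl) (.inl rfl) (by simpa using hσv)
      (by simpa using hσu')
    have a4 := h v hv v' hv' (-1) (-1) (.inr rfl) (.inr rfl) (by simpa using hσv)
      (by simpa using hσv')
    apply hyx
    simp [a1, a2, a3, a4]
  -- sign rule
  have sign : ∀ (x y : V) (ε δ : k), σ x = ε • x → σ y = δ • y →
      (-1) ^ d * ε * δ * B ((e ^ d) x) y = - B ((e ^ d) x) y := by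
    intro x y ε δ h h'
    rw [← hσB, hσpow, h, h']
    simp only [map_smul, LinearMap.smul_apply, smul_eq_mul]
    ring
  have symm : ∀ x y, B ((e ^ d) x) y = - (-1) ^ d * B ((e ^ d) y) x := by
    intro x y
    rw [skew_pow he, hBalt]; ring
  have hpm : ∀ (z : V) (ε : k), (ε = 1 ∨ ε = -1) → σ z = ε • z → σ z = z ∨ σ z = -z := by
    rintro z _ (rfl | rfl) h
    · left; simpa using h
    · right; simpa using h
  rcases Nat.even_or_odd d with hev | hod
  · -- even case
    have hεδ : ε * δ = -1 := by
      have := sign x y ε δ hσx hσy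
      rw [hev.neg_one_pow, one_mul] at this
      exact mul_right_cancel₀ hne (by rw [this]; ring)
    have hself : ∀ (z : V) (ε : k), (ε = 1 ∨ ε = -1) → σ z = ε • z → B ((e ^ d) z) z = 0 := by
      intro z ε hε h
      have := sign z z ε ε h h
      have h2 : ε * ε = 1 := by rcases hε with rfl | rfl <;> norm_num
      rw [hev.neg_one_pow, one_mul, h2, one_mul] at this
      exact self_eq_neg.1 this
    have hne' : B ((e ^ d) y) x ≠ 0 := by
      rw [symm y x, hev.neg_one_pow]
      simpa using hne
    refine block_split (ι := Bool) hBalt he hσB hσσ hσe W hWe hWσ hnd IH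
      (fun b => if b then x else y) d not ?_ ?_ ?_ ?_ ?_ ?_ ?_
    · rintro (_ | _) <;> simp [hx, hy]
    · rintro (_ | _) <;> simp [hd1 x hx, hd1 y hy]
    · intro c hc
      have c1 := hc true
      have c2 := hc false
      simp [hself x ε hε hσx, hself y δ hδ hσy, hne, hne'] at c1 c2
      rintro (_ | _) <;> assumption
    · simp
    · intro i
      have : ¬ Odd d := Nat.not_odd_iff_even.2 hev
      simp [this]
    · decide
    · rintro (_ | _)
      · simpa using hpm y δ hδ hσy
      · simpa using hpm x ε hε hσx
  · -- odd case
    have hεδ : ε * δ = 1 := by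
      have := sign x y ε δ hσx hσy
      rw [hod.neg_one_pow] at this
      exact mul_right_cancel₀ hne (by linear_combination -this)
    have hδε : δ = ε := by
      rcases hε with rfl | rfl <;> rcases hδ with rfl | rfl <;> first | rfl | skip
      · exact absurd hεδ (by norm_num)
      · exact absurd hεδ (by norm_num)
    rw [hδε] at hσy
    obtain ⟨z, hz, hσz, hzne⟩ : ∃ z ∈ W, σ z = ε • z ∧ B ((e ^ d) z) z ≠ 0 := by
      by_contra! h
      have a1 := h x hx hσx
      have a2 := h y hy hσy
      have a3 := h (x + y) (W.add_mem hx hy) (by rw [map_add, hσx, hσy, smul_add])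
      have a4 := symm y x
      rw [hod.neg_one_pow] at a4
      simp only [map_add, LinearMap.add_apply, a1, a2, a4] at a3
      apply hne
      have : (2 : k) * B ((e ^ d) x) y = 0 := by linear_combination a3
      simpa using this
    refine block_split (ι := Unit) hBalt he hσB hσσ hσe W hWe hWσ hnd IH
      (fun _ => z) d id ?_ ?_ ?_ ?_ ?_ ?_ ?_
    · simpa using hz
    · simpa using hd1 z hz
    · intro c hc
      have c1 := hc ()
      intro i
      simpa [hzne] using c1
    · simp
    · simpa using hod
    · decide
    · intro _
      exact hpm z ε hε hσz

theorem card_eq_finrank_ker [FiniteDimensional k V] {e : Module.End k V} {ι : Type} [Fintype ι]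
    (w : ι → V) (d : ι → ℕ) (h1 : ∀ i, (e ^ (d i + 1)) (w i) = 0)
    (h2 : LinearIndependent k (fun p : Σ i : ι, Fin (d i + 1) => (e ^ (p.2 : ℕ)) (w p.1)))
    (h3 : Submodule.span k
        (Set.range fun p : Σ i : ι, Fin (d i + 1) => (e ^ (p.2 : ℕ)) (w p.1)) = ⊤) :
    Fintype.card ι = finrank k (LinearMap.ker e) := by
  have hV : finrank k V = ∑ i, (d i + 1) := by
    have := finrank_span_eq_card h2
    rw [h3, finrank_top] at this
    simpa using this
  have hli : LinearIndependent k
      (fun p : Σ i : ι, Fin (d i) => (e ^ ((p.2 : ℕ) + 1)) (w p.1)) := by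
    refine h2.comp (fun p : Σ i : ι, Fin (d i) => (⟨p.1, p.2.succ⟩ : Σ i : ι, Fin (d i + 1))) ?_
    rintro ⟨i, s⟩ ⟨j, t⟩ h
    simp only [Sigma.mk.injEq] at h
    obtain ⟨rfl, h⟩ := h
    simpa using h
  have hR : LinearMap.range e = Submodule.span k (Set.range
      (fun p : Σ i : ι, Fin (d i) => (e ^ ((p.2 : ℕ) + 1)) (w p.1))) := by
    apply le_antisymm
    · rw [LinearMap.range_eq_map, ← h3, Submodule.map_span, Submodule.span_le]
      rintro _ ⟨_, ⟨⟨i, s, hs⟩, rfl⟩, rfl⟩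
      change e ((e ^ s) (w i)) ∈ Submodule.span k _
      rw [← Module.End.mul_apply, ← pow_succ']
      by_cases h : s < d i
      · exact Submodule.subset_span ⟨⟨i, ⟨s, h⟩⟩, rfl⟩
      · rw [show s = d i by omega, h1]; exact Submodule.zero_mem _
    · rw [Submodule.span_le]
      rintro _ ⟨⟨i, s, hs⟩, rfl⟩
      refine ⟨(e ^ s) (w i), ?_⟩
      rw [← Module.End.mul_apply, ← pow_succ']
  have hRk : finrank k (LinearMap.range e) = ∑ i, d i := by
    rw [hR, finrank_span_eq_card hli]
    simp
  have := LinearMap.finrank_range_add_finrank_ker e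
  rw [hRk, hV, Finset.sum_add_distrib] at this
  simp at this
  omega

end Aux

theorem adapted_cyclic_vectors_sp_gl
    {k V : Type*} [Field k] [IsAlgClosed k] [CharZero k]
    [AddCommGroup V] [Module k V] [FiniteDimensional k V]
    (n : ℕ) (hdim : finrank k V = 2 * n)
    (B : V →ₗ[k] V →ₗ[k] k)
    (hBnd : ∀ v : V, (∀ w : V, B v w = 0) → v = 0)
    (hBalt : ∀ v w : V, B w v = -B v w)
    (Vp Vm : Submodule k V) (hcompl : IsCompl Vp Vm)
    (hVp : finrank k Vp = n) (hVm : finrank k Vm = n)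
    (hisop : ∀ v ∈ Vp, ∀ w ∈ Vp, B v w = 0)
    (hisom : ∀ v ∈ Vm, ∀ w ∈ Vm, B v w = 0)
    (σ : Module.End k V)
    (hσp : ∀ v ∈ Vp, σ v = v) (hσm : ∀ v ∈ Vm, σ v = -v)
    (e : Module.End k V) (hnil : IsNilpotent e)
    (he : ∀ v w : V, B (e v) w + B v (e w) = 0)
    (hσe : σ ∘ₗ e ∘ₗ σ = -e) :
    ∃ (m : ℕ), m = finrank k ↥(LinearMap.ker e) ∧
    ∃ (w : Fin m → V) (d : Fin m → ℕ) (inv : Fin m → Fin m),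
      (∀ i, (e ^ (d i + 1)) (w i) = 0) ∧
      LinearIndependent k
        (fun p : Σ i : Fin m, Fin (d i + 1) => (e ^ (p.2 : ℕ)) (w p.1)) ∧
      Submodule.span k
        (Set.range fun p : Σ i : Fin m, Fin (d i + 1) => (e ^ (p.2 : ℕ)) (w p.1)) = ⊤ ∧
      (∀ i, inv (inv i) = i) ∧
      (∀ i, d (inv i) = d i) ∧
      (∀ i, inv i = i ↔ Odd (d i)) ∧
      (∀ i j : Fin m, j ≠ i → j ≠ inv i → ∀ s t : ℕ, s ≤ d i → t ≤ d j →
        B ((e ^ s) (w i)) ((e ^ t) (w j)) = 0) ∧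
      (∀ i, σ (w i) = w i ∨ σ (w i) = -w i) := by
  obtain hdec : ∀ v : V, ∃ a ∈ Vp, ∃ b ∈ Vm, a + b = v := fun v =>
    Submodule.mem_sup.1 (hcompl.sup_eq_top ▸ Submodule.mem_top)
  have hσσ : ∀ v, σ (σ v) = v := by
    intro v
    obtain ⟨a, ha, b, hb, rfl⟩ := hdec v
    rw [map_add, hσp a ha, hσm b hb, map_add, map_neg, hσp a ha, hσm b hb, neg_neg]
  have hσB : ∀ v w, B (σ v) (σ w) = - B v w := by
    intro v w
    obtain ⟨a, ha, b, hb, rfl⟩ := hdec v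
    obtain ⟨a', ha', b', hb', rfl⟩ := hdec w
    simp only [map_add, hσp a ha, hσm b hb, hσp a' ha', hσm b' hb', map_neg,
      LinearMap.add_apply, LinearMap.neg_apply, hisop a ha a' ha', hisom b hb b' hb']
    ring
  have hσe' : ∀ v, σ (e v) = - e (σ v) := by
    intro v
    have := LinearMap.congr_fun hσe (σ v)
    simpa [hσσ] using this
  obtain ⟨ι, _, w, d, inv, h1, h2, h3, h4, h5, h6, h7, h8⟩ :=
    good_of_nondeg hBalt he hnil hσB hσσ hσe' _ ⊤ rfl (by simp) (by simp)
      (fun x _ h => hBnd x fun y => h y trivial)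
  have hcard := card_eq_finrank_ker w d h1 h2 h3
  let E : Fin (Fintype.card ι) ≃ ι := (Fintype.equivFin ι).symm
  let F : (Σ i : Fin (Fintype.card ι), Fin (d (E i) + 1)) ≃ (Σ i : ι, Fin (d i + 1)) :=
    Equiv.sigmaCongrLeft (β := fun i => Fin (d i + 1)) E
  have hF : (fun p : Σ i : Fin (Fintype.card ι), Fin (d (E i) + 1) =>
      (e ^ (p.2 : ℕ)) (w (E p.1))) =
      (fun p : Σ i : ι, Fin (d i + 1) => (e ^ (p.2 : ℕ)) (w p.1)) ∘ F := rfl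
  refine ⟨Fintype.card ι, hcard, fun i => w (E i), fun i => d (E i),
    fun i => E.symm (inv (E i)), fun i => h1 _, ?_, ?_, ?_, ?_, ?_, ?_, fun i => h8 _⟩
  · rw [hF, linearIndependent_equiv]
    exact h2
  · rw [hF, F.surjective.range_comp]
    exact h3
  · intro i; simp [h4]
  · intro i; simp [h5]
  · intro i
    rw [← h6, Equiv.symm_apply_eq]
  · intro i j hji hj s t hs ht
    refine h7 _ _ (fun h => hji (E.injective h)) (fun h => hj ?_) s t hs ht
    exact (Equiv.eq_symm_apply E).2 h
end
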